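/- One has V̂₀(τ) = 1 for all τ ∈ ℍ, and for every integer n ≥ 1 the lowering operator satisfies L(V̂_{2n})(τ) = −(3π/2) V̂_{2n−2}(τ), where V̂_{2n}(τ) := ∑_{0≤j≤n} (−1)^{n+j} 3^j π^{2n−j} V_{2n−2j}(q) / ((2v)^j j! (2n−2j)!). -/

import Mathlib

open Complex Filter
open scoped Real

noncomputable section

/-- `q = e^{2πiτ}`. -/
def qq (τ : ℂ) : ℂ := Complex.exp (2 * (π : ℂ) * Complex.I * τ)

/-- The lowering operator `L = -2iv² ∂/∂τ̄`, where `∂/∂τ̄ = (1/2)(∂/∂u + i ∂/∂v)`. -/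
def lowerOp (f : ℂ → ℂ) (τ : ℂ) : ℂ :=
  -2 * Complex.I * (τ.im : ℂ) ^ 2 *
    ((1 / 2 : ℂ) * (fderiv ℝ f τ 1 + Complex.I * fderiv ℝ f τ Complex.I))

/-- Ramanujan's series `V_{2n}(q)`:
numerator `∑_{j∈ℤ} (−1)^j (6j+1)^{2n} q^{j(3j+1)/2}` divided by
denominator `∑_{j∈ℤ} (−1)^j q^{j(3j+1)/2}`. -/
def Vram (n : ℕ) (q : ℂ) : ℂ :=
  (∑' j : ℤ, (-1 : ℂ) ^ j * ((6 * j + 1 : ℤ) : ℂ) ^ (2 * n) * q ^ (j * (3 * j + 1) / 2)) /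
    (∑' j : ℤ, (-1 : ℂ) ^ j * q ^ (j * (3 * j + 1) / 2))

/-- The completion
`V̂_{2n}(τ) = ∑_{0≤j≤n} (−1)^{n+j} 3^j π^{2n−j} V_{2n−2j}(q) / ((2v)^j j! (2n−2j)!)`. -/
def Vhat (n : ℕ) (τ : ℂ) : ℂ :=
  ∑ j ∈ Finset.range (n + 1),
    (-1 : ℂ) ^ (n + j) * 3 ^ j * (π : ℂ) ^ (2 * n - j) * Vram (n - j) (qq τ) /
      ((2 * (τ.im : ℂ)) ^ j * (Nat.factorial j : ℂ) * (Nat.factorial (2 * n - 2 * j) : ℂ))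

/-!
Put `c = 3π / 2` and `h_m = (-π²)^m V_{2m}(q) / (2m)!`. Then `V̂_{2n}` is the sum of
`(c / v)^i / i! · h_m` over `i + m = n`. The operator `L` commutes with multiplication by
holomorphic functions and acts as `v² d/dv` on functions of `v`, so it sends each divided power of
`c / v` to `-c` times the preceding one.

Holomorphy of `V_{2n}(q)` in `τ` rests on two facts. As `(6j+1)² = 24p + 1` for `p = j(3j+1)/2`, the
numerator is a power series in `q` with coefficients of polynomial growth. By Euler's pentagonal
number theorem the denominator is `∏ (1 - qⁿ)`, which has no zeros in the unit disc.
-/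

/-! ### Series with polynomially bounded coefficients -/

theorem summable_add_one_pow_mul_geometric (k : ℕ) {r : ℝ} (h0 : 0 ≤ r) (h1 : r < 1) :
    Summable fun n : ℕ => ((n : ℝ) + 1) ^ k * r ^ n := by
  refine (summable_descFactorial_mul_geometric_of_norm_lt_one k
    (by rwa [Real.norm_of_nonneg h0])).of_nonneg_of_le (fun n => by positivity) fun n => ?_
  have h : (n + k + 1 - k) ^ k ≤ (n + k).descFactorial k := Nat.pow_sub_le_descFactorial _ _
  rw [show n + k + 1 - k = n + 1 by omega] at h
  gcongr
  exact_mod_cast h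

theorem differentiableOn_tsum_mul_pow {ι : Type*} {e : ι → ℕ} (he : Function.Injective e)
    {a : ι → ℂ} {C : ℝ} {k : ℕ} (ha : ∀ i, ‖a i‖ ≤ C * ((e i : ℝ) + 1) ^ k) :
    DifferentiableOn ℂ (fun q => ∑' i, a i * q ^ e i) (Metric.ball 0 1) := by
  intro q hq
  obtain ⟨r, hqr, hr1⟩ := exists_between (mem_ball_zero_iff.mp hq)
  have h0 : 0 ≤ r := (norm_nonneg q).trans hqr.le
  have hsum : Summable fun i => C * (((e i : ℝ) + 1) ^ k * r ^ e i) :=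
    ((summable_add_one_pow_mul_geometric k h0 hr1).comp_injective he).mul_left C
  refine ((differentiableOn_tsum_of_summable_norm hsum (fun i => by fun_prop) Metric.isOpen_ball
    fun i w hw => ?_).differentiableAt
      (Metric.isOpen_ball.mem_nhds (mem_ball_zero_iff.mpr hqr))).differentiableWithinAt
  have hw : ‖w‖ ≤ r := (mem_ball_zero_iff.mp hw).le
  rw [norm_mul, norm_pow, ← mul_assoc]
  have hbound : 0 ≤ C * ((e i : ℝ) + 1) ^ k := (norm_nonneg _).trans (ha i)
  gcongr
  exact ha i

/-! ### The pentagonal number theorem in a normed ring -/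

section PentagonalNumberTheorem

variable {R : Type*} [NormedCommRing R] [NormOneClass R] {x : R}

theorem norm_prod_range_one_sub_pow_le (hx : ‖x‖ < 1) (k n : ℕ) :
    ‖∏ i ∈ Finset.range n, (1 - x ^ (k + i + 1))‖ ≤ Real.exp (1 - ‖x‖)⁻¹ := by
  have hsum : ∑ i ∈ Finset.range n, ‖-x ^ (k + i + 1)‖ ≤ (1 - ‖x‖)⁻¹ :=
    calc ∑ i ∈ Finset.range n, ‖-x ^ (k + i + 1)‖
        ≤ ∑ i ∈ Finset.range n, ‖x‖ ^ i := by
          gcongr with i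
          rw [norm_neg]
          exact (norm_pow_le _ _).trans
            (pow_le_pow_of_le_one (norm_nonneg _) hx.le (by omega))
      _ ≤ ∑' i : ℕ, ‖x‖ ^ i :=
          (summable_geometric_of_lt_one (norm_nonneg _) hx).sum_le_tsum _ fun _ _ => by positivity
      _ = (1 - ‖x‖)⁻¹ := tsum_geometric_of_lt_one (norm_nonneg _) hx
  calc ‖∏ i ∈ Finset.range n, (1 - x ^ (k + i + 1))‖
      ≤ ‖∏ i ∈ Finset.range n, (1 + -x ^ (k + i + 1)) - 1‖ + ‖(1 : R)‖ := by
        simpa only [sub_eq_add_neg] using norm_le_norm_sub_add _ _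
    _ ≤ Real.exp (∑ i ∈ Finset.range n, ‖-x ^ (k + i + 1)‖) - 1 + 1 := by
        rw [norm_one]
        gcongr
        exact Finset.norm_prod_one_add_sub_one_le _ _
    _ ≤ Real.exp (1 - ‖x‖)⁻¹ := by
        rw [sub_add_cancel]
        gcongr

theorem norm_pow_mul_prod_one_sub_pow_le (hx : ‖x‖ < 1) (k n : ℕ) :
    ‖x ^ ((k + 1) * n) * ∏ i ∈ Finset.range (n + 1), (1 - x ^ (k + i + 1))‖ ≤
      ‖x‖ ^ n * Real.exp (1 - ‖x‖)⁻¹ := by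
  have hpow : ‖x ^ ((k + 1) * n)‖ ≤ ‖x‖ ^ n :=
    (norm_pow_le _ _).trans
      (pow_le_pow_of_le_one (norm_nonneg _) hx.le (Nat.le_mul_of_pos_left n k.succ_pos))
  grw [norm_mul_le, hpow, norm_prod_range_one_sub_pow_le hx]

/-- The sequence is the remainder of Euler's iteration in `Pentagonal.tprod_one_sub_pow`. -/
theorem tendsto_pentagonal_tail (hx : ‖x‖ < 1) :
    Tendsto (fun k : ℕ => (-1) ^ (k + 1) * x ^ ((k + 1) * (3 * k + 4) / 2) *
      ∑' n : ℕ, x ^ ((k + 1) * n) * ∏ i ∈ Finset.range (n + 1), (1 - x ^ (k + i + 1)))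
      atTop (nhds 0) := by
  set B : ℝ := (1 - ‖x‖)⁻¹ * Real.exp (1 - ‖x‖)⁻¹
  have hlim : Tendsto (fun k : ℕ => ‖x‖ ^ k * B) atTop (nhds 0) := by
    simpa using (tendsto_pow_atTop_nhds_zero_of_lt_one (norm_nonneg x) hx).mul_const B
  refine squeeze_zero_norm (fun k => ?_) hlim
  have hsign : ‖(-1 : R) ^ (k + 1)‖ ≤ 1 := by
    simpa using norm_pow_le (-1 : R) (k + 1)
  have hpow : ‖x ^ ((k + 1) * (3 * k + 4) / 2)‖ ≤ ‖x‖ ^ k := by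
    refine (norm_pow_le _ _).trans (pow_le_pow_of_le_one (norm_nonneg _) hx.le ?_)
    rw [Nat.le_div_iff_mul_le (by norm_num)]
    nlinarith
  have htsum := tsum_of_norm_bounded
    ((hasSum_geometric_of_lt_one (norm_nonneg x) hx).mul_right (Real.exp (1 - ‖x‖)⁻¹))
    (norm_pow_mul_prod_one_sub_pow_le hx k)
  grw [norm_mul_le, norm_mul_le, hsign, hpow, htsum, one_mul]

variable [CompleteSpace R]

theorem summable_negOnePow_mul_pow_pentagonal_neg (hx : ‖x‖ < 1) :
    Summable fun j : ℤ => (j.negOnePow : R) * x ^ pentagonal (-j) := by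
  have hgeom : Summable fun j : ℤ => ‖x‖ ^ pentagonal (-j) :=
    (summable_geometric_of_lt_one (norm_nonneg x) hx).comp_injective
      (pentagonal_injective.comp neg_injective)
  refine hgeom.of_norm_bounded fun j => ?_
  rcases Int.even_or_odd j with hj | hj
  · simpa [Int.negOnePow_even j hj] using norm_pow_le x _
  · simpa [Int.negOnePow_odd j hj] using norm_pow_le x _

theorem hasSum_nat_pentagonal_sub (hx : ‖x‖ < 1) :
    HasSum (fun k : ℕ => (-1) ^ k * (x ^ pentagonal (-k) - x ^ pentagonal (k + 1)))
      (∑' j : ℤ, (j.negOnePow : R) * x ^ pentagonal (-j)) := by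
  convert (summable_negOnePow_mul_pow_pentagonal_neg hx).hasSum.nat_add_neg_add_one using 2 with k
  rw [neg_neg, Int.negOnePow_neg, Int.negOnePow_succ, Units.val_neg, Int.cast_neg,
    Int.cast_negOnePow_natCast]
  ring

theorem tsum_negOnePow_mul_pow_pentagonal_neg (hx : ‖x‖ < 1) :
    ∑' j : ℤ, (j.negOnePow : R) * x ^ pentagonal (-j) = ∏' n : ℕ, (1 - x ^ (n + 1)) := by
  have hgeom := summable_geometric_of_lt_one (norm_nonneg x) hx
  have hprod (k : ℕ) : Multipliable fun n : ℕ => 1 - x ^ (n + k + 1) := by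
    simp_rw [sub_eq_add_neg]
    refine multipliable_one_add_of_summable <|
      ((summable_nat_add_iff (k + 1)).mpr hgeom).of_nonneg_of_le
        (fun _ => norm_nonneg _) fun n => ?_
    rw [norm_neg]
    exact norm_pow_le _ _
  rw [Pentagonal.tprod_one_sub_pow (tendsto_pow_atTop_nhds_zero_of_norm_lt_one hx)
    (fun k => (hgeom.mul_right _).of_norm_bounded (norm_pow_mul_prod_one_sub_pow_le hx k))
    hprod (hasSum_nat_pentagonal_sub hx).summable (tendsto_pentagonal_tail hx),
    (hasSum_nat_pentagonal_sub hx).tsum_eq]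

end PentagonalNumberTheorem

/-! ### Holomorphy of Ramanujan's series -/

/-- The numerator of `V_{2n}(q)`, a twisted moment of the pentagonal number series. The exponent
`j(3j+1)/2` is encoded as the natural number `pentagonal (-j)`. -/
def pentagonalMoment (n : ℕ) (q : ℂ) : ℂ :=
  ∑' j : ℤ, (j.negOnePow : ℂ) * ((6 * j + 1 : ℤ) : ℂ) ^ (2 * n) * q ^ pentagonal (-j)

theorem Vram_eq_pentagonalMoment_div (n : ℕ) (q : ℂ) :
    Vram n q = pentagonalMoment n q / pentagonalMoment 0 q := by
  have hexp (j : ℤ) : q ^ (j * (3 * j + 1) / 2) = q ^ pentagonal (-j) := by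
    rw [← zpow_natCast, natCast_pentagonal]
    ring_nf
  simp only [Vram, pentagonalMoment, hexp, Int.cast_negOnePow, mul_zero, pow_zero, mul_one]

theorem differentiableOn_pentagonalMoment (n : ℕ) :
    DifferentiableOn ℂ (pentagonalMoment n) (Metric.ball 0 1) := by
  refine differentiableOn_tsum_mul_pow (C := 24 ^ n) (k := n)
    (pentagonal_injective.comp neg_injective) fun j => ?_
  have hsq : ((6 * j + 1 : ℤ) : ℝ) ^ 2 = 24 * (pentagonal (-j) : ℝ) + 1 := by
    exact_mod_cast show (6 * j + 1) ^ 2 = 24 * (pentagonal (-j) : ℤ) + 1 by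
      linear_combination -12 * two_mul_natCast_pentagonal_neg j
  calc ‖(j.negOnePow : ℂ) * ((6 * j + 1 : ℤ) : ℂ) ^ (2 * n)‖
      = (24 * (pentagonal (-j) : ℝ) + 1) ^ n := by
        rw [Int.cast_negOnePow, norm_mul, norm_zpow, norm_neg, norm_one, one_zpow, one_mul,
          norm_pow, Complex.norm_intCast, pow_mul, sq_abs, hsq]
    _ ≤ (24 * ((pentagonal (-j) : ℝ) + 1)) ^ n := by
        gcongr
        linarith
    _ = 24 ^ n * ((pentagonal (-j) : ℝ) + 1) ^ n := mul_pow _ _ _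

theorem qq_eq_qParam (τ : ℂ) : qq τ = Function.Periodic.qParam 1 τ := by
  simp [qq, Function.Periodic.qParam]

theorem norm_qq_lt_one {τ : ℂ} (hτ : 0 < τ.im) : ‖qq τ‖ < 1 := by
  simpa [qq] using UpperHalfPlane.norm_exp_two_pi_I_lt_one ⟨τ, hτ⟩

theorem pentagonalMoment_zero_qq_ne_zero {τ : ℂ} (hτ : 0 < τ.im) :
    pentagonalMoment 0 (qq τ) ≠ 0 := by
  have heuler : pentagonalMoment 0 (qq τ) = ∏' n : ℕ, (1 - qq τ ^ (n + 1)) := by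
    simpa [pentagonalMoment] using tsum_negOnePow_mul_pow_pentagonal_neg (norm_qq_lt_one hτ)
  rw [heuler, qq_eq_qParam]
  exact ModularForm.eta_tprod_ne_zero hτ

theorem Vram_zero_qq {τ : ℂ} (hτ : 0 < τ.im) : Vram 0 (qq τ) = 1 := by
  rw [Vram_eq_pentagonalMoment_div, div_self (pentagonalMoment_zero_qq_ne_zero hτ)]

theorem differentiableAt_Vram_qq (n : ℕ) {τ : ℂ} (hτ : 0 < τ.im) :
    DifferentiableAt ℂ (fun z => Vram n (qq z)) τ := by
  have hqq : DifferentiableAt ℂ qq τ := by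
    unfold qq
    fun_prop
  have hmoment (m : ℕ) : DifferentiableAt ℂ (fun z => pentagonalMoment m (qq z)) τ :=
    ((differentiableOn_pentagonalMoment m).differentiableAt (Metric.isOpen_ball.mem_nhds
      (mem_ball_zero_iff.mpr (norm_qq_lt_one hτ)))).comp τ hqq
  simp_rw [Vram_eq_pentagonalMoment_div]
  exact (hmoment n).fun_div (hmoment 0) (pentagonalMoment_zero_qq_ne_zero hτ)

/-! ### The lowering operator -/

section LoweringOperator

variable {f g : ℂ → ℂ} {τ : ℂ}

theorem lowerOp_fun_sum {ι : Type*} {s : Finset ι} {F : ι → ℂ → ℂ}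
    (hF : ∀ i ∈ s, DifferentiableAt ℝ (F i) τ) :
    lowerOp (fun z => ∑ i ∈ s, F i z) τ = ∑ i ∈ s, lowerOp (F i) τ := by
  simp only [lowerOp, fderiv_fun_sum hF, sum_apply, Finset.mul_sum,
    ← Finset.sum_add_distrib]

theorem lowerOp_fun_mul (hf : DifferentiableAt ℝ f τ) (hg : DifferentiableAt ℝ g τ) :
    lowerOp (fun z => f z * g z) τ = f τ * lowerOp g τ + g τ * lowerOp f τ := by
  simp only [lowerOp, fderiv_fun_mul hf hg, add_apply, smul_apply, smul_eq_mul]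
  ring

theorem lowerOp_eq_zero_of_differentiableAt (hf : DifferentiableAt ℂ f τ) : lowerOp f τ = 0 := by
  have hCR : fderiv ℝ f τ I = I * fderiv ℝ f τ 1 :=
    (differentiableAt_complex_iff_differentiableAt_real.mp hf).2
  rw [lowerOp, hCR, ← mul_assoc I I, I_mul_I]
  ring

theorem lowerOp_mul_of_differentiableAt (hf : DifferentiableAt ℝ f τ)
    (hg : DifferentiableAt ℂ g τ) :
    lowerOp (fun z => f z * g z) τ = lowerOp f τ * g τ := by
  rw [lowerOp_fun_mul hf (hg.restrictScalars ℝ), lowerOp_eq_zero_of_differentiableAt hg, mul_zero,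
    zero_add, mul_comm]

theorem lowerOp_comp_im {φ : ℝ → ℂ} {φ' : ℂ} (hφ : HasDerivAt φ φ' τ.im) :
    lowerOp (fun z => φ z.im) τ = (τ.im : ℂ) ^ 2 * φ' := by
  have hfderiv : HasFDerivAt (fun z : ℂ => φ z.im) _ τ :=
    hφ.hasFDerivAt.comp τ imCLM.hasFDerivAt
  have hre : fderiv ℝ (fun z : ℂ => φ z.im) τ 1 = 0 := by simp [hfderiv.fderiv]
  have him : fderiv ℝ (fun z : ℂ => φ z.im) τ I = φ' := by simp [hfderiv.fderiv]
  rw [lowerOp, hre, him]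
  linear_combination -(τ.im : ℂ) ^ 2 * φ' * I_mul_I

end LoweringOperator

/-! ### Completions by divided powers of `c / v` -/

/-- The divided power `(c / v)^j / j!` with `v = Im τ`. -/
def invImDividedPow (c : ℂ) (j : ℕ) (τ : ℂ) : ℂ := (c / τ.im) ^ j / j.factorial

/-- The nonholomorphic completion `∑_{i+m=n} (c / v)^i / i! · h_m(τ)` of a sequence of functions
`h`. The functions `V̂_{2n}` are of this form. -/
def dividedPowCompletion (c : ℂ) (h : ℕ → ℂ → ℂ) (n : ℕ) (τ : ℂ) : ℂ :=
  ∑ p ∈ Finset.HasAntidiagonal.antidiagonal n, invImDividedPow c p.1 τ * h p.2 τ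

section Completion

variable {τ : ℂ} (c : ℂ)

theorem hasDerivAt_div_ofReal_pow_succ_div_factorial (j : ℕ) {v : ℝ} (hv : v ≠ 0) :
    HasDerivAt (fun t : ℝ => (c / (t : ℂ)) ^ (j + 1) / ((j + 1).factorial : ℂ))
      (-c / (v : ℂ) ^ 2 * ((c / v) ^ j / j.factorial)) v := by
  have hv' : (v : ℂ) ≠ 0 := ofReal_ne_zero.mpr hv
  have hdiv : HasDerivAt (fun t : ℝ => c / (t : ℂ)) (-c / (v : ℂ) ^ 2) v := by
    simpa [div_eq_mul_inv] using ((hasDerivAt_inv hv').const_mul c).comp_ofReal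
  refine ((hdiv.fun_pow (j + 1)).div_const ((j + 1).factorial : ℂ)).congr_deriv ?_
  have hfac : (j.factorial : ℂ) ≠ 0 := Nat.cast_ne_zero.mpr j.factorial_ne_zero
  have hj : (j : ℂ) + 1 ≠ 0 := Nat.cast_add_one_ne_zero j
  rw [Nat.factorial_succ]
  push_cast
  field_simp

theorem differentiableAt_invImDividedPow (j : ℕ) (hτ : τ.im ≠ 0) :
    DifferentiableAt ℝ (invImDividedPow c j) τ := by
  have him : DifferentiableAt ℝ (fun z : ℂ => (z.im : ℂ)) τ :=
    (ofRealCLM.comp imCLM).differentiableAt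
  have := ofReal_ne_zero.mpr hτ
  unfold invImDividedPow
  fun_prop (disch := assumption)

theorem lowerOp_invImDividedPow_zero : lowerOp (invImDividedPow c 0) τ = 0 :=
  lowerOp_eq_zero_of_differentiableAt (by unfold invImDividedPow; simp)

theorem lowerOp_invImDividedPow_succ (j : ℕ) (hτ : τ.im ≠ 0) :
    lowerOp (invImDividedPow c (j + 1)) τ = -c * invImDividedPow c j τ := by
  have := ofReal_ne_zero.mpr hτ
  unfold invImDividedPow
  rw [lowerOp_comp_im (hasDerivAt_div_ofReal_pow_succ_div_factorial c j hτ)]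
  field_simp

theorem lowerOp_dividedPowCompletion_succ {h : ℕ → ℂ → ℂ} (n : ℕ)
    (hh : ∀ m, DifferentiableAt ℂ (h m) τ) (hτ : τ.im ≠ 0) :
    lowerOp (dividedPowCompletion c h (n + 1)) τ = -c * dividedPowCompletion c h n τ := by
  have hterm (p : ℕ × ℕ) : DifferentiableAt ℝ (fun z => invImDividedPow c p.1 z * h p.2 z) τ :=
    (differentiableAt_invImDividedPow c p.1 hτ).fun_mul ((hh p.2).restrictScalars ℝ)
  unfold dividedPowCompletion
  rw [lowerOp_fun_sum fun p _ => hterm p]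
  simp only [lowerOp_mul_of_differentiableAt (differentiableAt_invImDividedPow c _ hτ) (hh _)]
  rw [Finset.Nat.sum_antidiagonal_succ, lowerOp_invImDividedPow_zero, zero_mul, zero_add,
    Finset.mul_sum]
  simp only [lowerOp_invImDividedPow_succ c _ hτ, mul_assoc]

end Completion

theorem Vhat_eq_dividedPowCompletion (n : ℕ) :
    Vhat n = dividedPowCompletion (3 * π / 2)
      (fun m z => (-(π : ℂ) ^ 2) ^ m / (2 * m).factorial * Vram m (qq z)) n := by
  funext τ
  rw [dividedPowCompletion, Finset.Nat.sum_antidiagonal_eq_sum_range_succ_mk, Vhat]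
  refine Finset.sum_congr rfl fun j hj => ?_
  obtain ⟨m, rfl⟩ := Nat.exists_eq_add_of_le (Finset.mem_range_succ_iff.mp hj)
  have hsign : (-1 : ℂ) ^ (j + m + j) = (-1) ^ m := by
    rw [show j + m + j = m + 2 * j by ring, pow_add, pow_mul, neg_one_sq, one_pow, mul_one]
  rw [hsign, show 2 * (j + m) - j = 2 * m + j by omega,
    show 2 * (j + m) - 2 * j = 2 * m by omega, show j + m - j = m by omega, invImDividedPow,
    neg_pow ((π : ℂ) ^ 2) m, ← pow_mul, pow_add, div_div, div_pow, mul_pow 3 (π : ℂ)]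
  ring

/-- `V̂₀(τ) = 1` for all `τ ∈ ℍ`, and for every `n ≥ 1` the lowering
operator satisfies `L(V̂_{2n}) = −(3π/2)·V̂_{2n−2}` on ℍ. -/
theorem Vhat_lowering :
    (∀ τ : ℂ, 0 < τ.im → Vhat 0 τ = 1) ∧
    (∀ n : ℕ, 1 ≤ n → ∀ τ : ℂ, 0 < τ.im →
      lowerOp (Vhat n) τ = -(3 * (π : ℂ) / 2) * Vhat (n - 1) τ) := by
  constructor
  · intro τ hτ
    simp [Vhat, Vram_zero_qq hτ]
  · intro n hn τ hτ
    obtain ⟨m, rfl⟩ := Nat.exists_eq_add_of_le' hn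
    rw [Nat.add_sub_cancel, Vhat_eq_dividedPowCompletion, Vhat_eq_dividedPowCompletion]
    exact lowerOp_dividedPowCompletion_succ _ m
      (fun k => (differentiableAt_Vram_qq k hτ).const_mul _) hτ.ne'
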